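/- Analyticity of the marginal entropy in the complex domain: let F be a probability measure on [0,∞) with ∫₀^∞ x dF(x) ≤ 𝖲, and let f(y;F) = ∫₀^∞ K(x,y) dF(x) be the output density. Define, for complex z with Re(z) > 0, the extended kernel K(z,y) = (1/(2π)) ∫_{−π}^{π} exp(−(y + z + 𝖨 + 2·√z·√𝖨·cos θ)) · B(y·(z + 𝖨 + 2·√z·√𝖨·cos θ)) dθ, where √z is the principal square root and B(u) := Σ_{k≥0} uᵏ/(k!)² is the entire function satisfying B(u) = I₀(2√u) for u ≥ 0. Then the function z ↦ −∫₀^∞ K(z,y) · ln f(y;F) dy is well defined and complex-analytic on the open right half-plane { z ∈ ℂ : Re(z) > 0 }, and it agrees with the marginal entropy h(x;F) = −∫₀^∞ K(x,y)·ln f(y;F) dy for real z = x > 0. -/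

import Mathlib

/-!
For a uniform phase `θ`, the kernel averages the density `e^{-(y + p)} B(y p)` of the output power
`y` given the received power `p = z + I + 2 √z √I cos θ`; integrating the exponential series
termwise identifies `B(y p)` with `I₀(2 √(y p))`. Since `|B u| ≤ e^{a + b}` whenever `|u| ≤ a b`,
the choice `a = y / 2`, `b = 2 |p|` bounds the density by `e^{3 |p| - y / 2}`, locally uniformly in
`z`. For real `p ≥ 0` the choice `a = y`, `b = p` bounds it by `1`, and `I₀ ≥ 1` bounds it below by
`e^{-(y + p)}`; averaged over the input these two bounds give `|ln f(y; F)| ≤ y + C`. Hence the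
entropy integral converges locally uniformly in `z`, and Cauchy's estimate, which bounds the
`z`-derivative of the integrand as well, makes it holomorphic.
-/

open MeasureTheory Real Filter Topology

noncomputable def besselI0 (r : ℝ) : ℝ :=
  (1 / (2 * π)) * ∫ t in (0:ℝ)..(2 * π), Real.exp (r * Real.cos t)

/-- The channel kernel, in its alternative form. -/
noncomputable def K (I x y : ℝ) : ℝ :=
  (1 / (2 * π)) * ∫ θ in (-π)..π,
    Real.exp (-(y + x + I + 2 * Real.sqrt (x * I) * Real.cos θ)) *
      besselI0 (2 * Real.sqrt (y * (x + I + 2 * Real.sqrt (x * I) * Real.cos θ)))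

/-- The entire function `B` with `B u = I₀(2 √u)` for `u ≥ 0`. -/
noncomputable def B (u : ℂ) : ℂ := ∑' k : ℕ, u ^ k / ((Nat.factorial k : ℂ)) ^ 2

/-- The extension of the kernel to complex first argument, using the principal square root. -/
noncomputable def Kc (I : ℝ) (z : ℂ) (y : ℝ) : ℂ :=
  (1 / (2 * π) : ℝ) * ∫ θ in (-π)..π,
    Complex.exp (-((y : ℂ) + z + (I : ℂ) +
        2 * z ^ ((1:ℂ)/2) * (Real.sqrt I : ℂ) * (Real.cos θ : ℂ))) *
      B ((y : ℂ) * (z + (I : ℂ) + 2 * z ^ ((1:ℂ)/2) * (Real.sqrt I : ℂ) * (Real.cos θ : ℂ)))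

section ParametricIntegral

variable {α E : Type*} [MeasurableSpace α] {μ : Measure α} [NormedAddCommGroup E]

lemma aestronglyMeasurable_of_hasDerivAt {𝕜 : Type*} [NontriviallyNormedField 𝕜]
    [NormedSpace 𝕜 E] {g : 𝕜 → α → E} {g' : α → E} {z₀ : 𝕜}
    (hmeas : ∀ᶠ z in 𝓝 z₀, AEStronglyMeasurable (g z) μ)
    (hderiv : ∀ᵐ a ∂μ, HasDerivAt (g · a) (g' a) z₀) : AEStronglyMeasurable g' μ := by
  obtain ⟨u, hu, humeas⟩ :=
    exists_seq_forall_of_frequently (hmeas.filter_mono (nhdsWithin_le_nhds (s := {z₀}ᶜ))).frequently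
  refine aestronglyMeasurable_of_tendsto_ae atTop
    (fun n => ((humeas n).sub hmeas.self_of_nhds).const_smul (u n - z₀)⁻¹) ?_
  filter_upwards [hderiv] with a ha using (hasDerivAt_iff_tendsto_slope.1 ha).comp hu

variable [NormedSpace ℂ E]

lemma norm_deriv_le_of_forall_mem_ball_norm_le {f : ℂ → E} {z₀ z : ℂ} {r C : ℝ}
    (hf : DifferentiableOn ℂ f (Metric.ball z₀ r)) (hC : ∀ w ∈ Metric.ball z₀ r, ‖f w‖ ≤ C)
    (hz : z ∈ Metric.ball z₀ (r / 2)) : ‖deriv f z‖ ≤ C / (r / 2) := by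
  have hr : 0 < r / 2 := dist_nonneg.trans_lt hz
  have hsub : Metric.closedBall z (r / 2) ⊆ Metric.ball z₀ r :=
    Metric.closedBall_subset_ball' (by linarith [Metric.mem_ball.1 hz])
  exact Complex.norm_deriv_le_of_forall_mem_sphere_norm_le hr
    ((hf.mono hsub).diffContOnCl_ball subset_rfl)
    fun w hw => hC w (hsub (Metric.sphere_subset_closedBall hw))

lemma differentiableAt_integral_of_dominated {g : ℂ → α → E} {z₀ : ℂ} {r : ℝ} (hr : 0 < r)
    {bound : α → ℝ} (hmeas : ∀ z ∈ Metric.ball z₀ r, AEStronglyMeasurable (g z) μ)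
    (hdiff : ∀ᵐ a ∂μ, DifferentiableOn ℂ (g · a) (Metric.ball z₀ r))
    (hbound : ∀ᵐ a ∂μ, ∀ z ∈ Metric.ball z₀ r, ‖g z a‖ ≤ bound a) (hint : Integrable bound μ) :
    DifferentiableAt ℂ (fun z => ∫ a, g z a ∂μ) z₀ := by
  have hz₀ : z₀ ∈ Metric.ball z₀ r := Metric.mem_ball_self hr
  have hmeas_nhds : ∀ᶠ z in 𝓝 z₀, AEStronglyMeasurable (g z) μ :=
    eventually_of_mem (Metric.ball_mem_nhds z₀ hr) hmeas
  have hderiv : ∀ᵐ a ∂μ, ∀ z ∈ Metric.ball z₀ (r / 2),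
      HasDerivAt (g · a) (deriv (g · a) z) z := by
    filter_upwards [hdiff] with a ha z hz
    exact (ha.differentiableAt (Metric.isOpen_ball.mem_nhds
      (Metric.ball_subset_ball (by linarith) hz))).hasDerivAt
  have hderiv_bound : ∀ᵐ a ∂μ, ∀ z ∈ Metric.ball z₀ (r / 2),
      ‖deriv (g · a) z‖ ≤ bound a / (r / 2) := by
    filter_upwards [hdiff, hbound] with a ha hb z hz
    exact norm_deriv_le_of_forall_mem_ball_norm_le ha hb hz
  have hderiv_meas : AEStronglyMeasurable (fun a => deriv (g · a) z₀) μ :=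
    aestronglyMeasurable_of_hasDerivAt hmeas_nhds
      (hderiv.mono fun a ha => ha z₀ (Metric.mem_ball_self (half_pos hr)))
  exact (hasDerivAt_integral_of_dominated_loc_of_deriv_le
    (F' := fun z a => deriv (g · a) z) (Metric.ball_mem_nhds z₀ (half_pos hr))
    hmeas_nhds (hint.mono' (hmeas z₀ hz₀) (hbound.mono fun a ha => ha z₀ hz₀)) hderiv_meas
    hderiv_bound (hint.div_const _) hderiv).2.differentiableAt

end ParametricIntegral

section EntireB

lemma hasSum_pow_div_factorial_mul_exp (a b : ℝ) :
    HasSum (fun k : ℕ => a ^ k / (k.factorial : ℝ) * Real.exp b) (Real.exp (a + b)) := by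
  rw [Real.exp_add, Real.exp_eq_exp_ℝ]
  exact (NormedSpace.expSeries_div_hasSum_exp a).mul_right _

variable {a b : ℝ} {u : ℂ}

lemma norm_pow_div_factorial_sq_le (ha : 0 ≤ a) (hb : 0 ≤ b) (hu : ‖u‖ ≤ a * b) (k : ℕ) :
    ‖u ^ k / (k.factorial : ℂ) ^ 2‖ ≤ a ^ k / (k.factorial : ℝ) * Real.exp b := by
  rw [norm_div, norm_pow, norm_pow, Complex.norm_natCast]
  calc ‖u‖ ^ k / (k.factorial : ℝ) ^ 2
      ≤ (a * b) ^ k / (k.factorial : ℝ) ^ 2 := by gcongr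
    _ = a ^ k / (k.factorial : ℝ) * (b ^ k / (k.factorial : ℝ)) := by ring
    _ ≤ a ^ k / (k.factorial : ℝ) * Real.exp b := by
      gcongr
      exact Real.pow_div_factorial_le_exp b hb k

lemma norm_B_le_exp_add (ha : 0 ≤ a) (hb : 0 ≤ b) (hu : ‖u‖ ≤ a * b) :
    ‖B u‖ ≤ Real.exp (a + b) :=
  tsum_of_norm_bounded (hasSum_pow_div_factorial_mul_exp a b)
    (norm_pow_div_factorial_sq_le ha hb hu)

lemma differentiable_B : Differentiable ℂ B := by
  intro u
  have hball : DifferentiableOn ℂ B (Metric.ball 0 (‖u‖ + 1)) := by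
    refine Complex.differentiableOn_tsum_of_summable_norm
      (hasSum_pow_div_factorial_mul_exp (‖u‖ + 1) 1).summable (fun k => by fun_prop)
      Metric.isOpen_ball fun k w hw => norm_pow_div_factorial_sq_le (by positivity) zero_le_one ?_ k
    simpa only [mul_one] using (mem_ball_zero_iff.1 hw).le
  exact hball.differentiableAt (Metric.isOpen_ball.mem_nhds (by simp))

end EntireB

section Bessel

lemma integral_cos_pow_odd (k : ℕ) : ∫ t in (0:ℝ)..(2 * π), Real.cos t ^ (2 * k + 1) = 0 := by
  induction k with
  | zero => simp
  | succ k ih =>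
    rw [show 2 * (k + 1) + 1 = (2 * k + 1) + 2 by ring, integral_cos_pow, ih]
    simp

lemma integral_cos_pow_even (k : ℕ) :
    ∫ t in (0:ℝ)..(2 * π), Real.cos t ^ (2 * k) =
      2 * π * ((2 * k).factorial : ℝ) / (4 ^ k * (k.factorial : ℝ) ^ 2) := by
  induction k with
  | zero => simp
  | succ k ih =>
    rw [show 2 * (k + 1) = 2 * k + 2 by ring, integral_cos_pow, ih]
    simp only [Nat.factorial_succ, Real.sin_two_pi, Real.sin_zero]
    push_cast
    field_simp
    ring

lemma hasSum_integral_exp_mul_cos (r : ℝ) :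
    HasSum (fun n : ℕ => r ^ n / (n.factorial : ℝ) * ∫ t in (0:ℝ)..(2 * π), Real.cos t ^ n)
      (∫ t in (0:ℝ)..(2 * π), Real.exp (r * Real.cos t)) := by
  simp only [← intervalIntegral.integral_const_mul]
  refine intervalIntegral.hasSum_integral_of_dominated_convergence
    (fun n _ => |r| ^ n / (n.factorial : ℝ))
    (fun n => Continuous.aestronglyMeasurable (by fun_prop))
    (fun n => Eventually.of_forall fun t _ => ?_)
    (Eventually.of_forall fun t _ => Real.summable_pow_div_factorial |r|)
    intervalIntegrable_const (Eventually.of_forall fun t _ => ?_)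
  · rw [norm_mul, norm_div, norm_pow, norm_pow, Real.norm_natCast, Real.norm_eq_abs]
    exact mul_le_of_le_one_right (by positivity)
      (pow_le_one₀ (norm_nonneg _) (Real.abs_cos_le_one t))
  · simpa only [mul_pow, div_mul_eq_mul_div, Real.exp_zero, mul_one, add_zero]
      using hasSum_pow_div_factorial_mul_exp (r * Real.cos t) 0

lemma hasSum_besselI0 (r : ℝ) :
    HasSum (fun k : ℕ => ((r / 2) ^ 2) ^ k / (k.factorial : ℝ) ^ 2) (besselI0 r) := by
  have hseries := (hasSum_integral_exp_mul_cos r).mul_left (1 / (2 * π))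
  have hodd : ∀ n ∉ Set.range (fun k : ℕ => 2 * k), 1 / (2 * π) *
      (r ^ n / (n.factorial : ℝ) * ∫ t in (0:ℝ)..(2 * π), Real.cos t ^ n) = 0 := by
    intro n hn
    obtain ⟨k, rfl⟩ : Odd n :=
      Nat.not_even_iff_odd.1 fun h => hn (by simpa using h)
    rw [integral_cos_pow_odd, mul_zero, mul_zero]
  have heven := ((mul_right_injective₀ (two_ne_zero' ℕ)).hasSum_iff hodd).2 hseries
  refine heven.congr_fun fun k => ?_
  rw [Function.comp_apply, integral_cos_pow_even, ← pow_mul, div_pow, pow_mul 2 2 k]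
  field_simp
  norm_num

lemma ofReal_besselI0 (r : ℝ) : (besselI0 r : ℂ) = B ((r / 2) ^ 2) := by
  rw [B, ← (Complex.hasSum_ofReal.2 (hasSum_besselI0 r)).tsum_eq]
  push_cast
  rfl

lemma one_le_besselI0 (r : ℝ) : 1 ≤ besselI0 r := by
  simpa using le_hasSum (hasSum_besselI0 r) 0 fun k _ => by positivity

lemma continuous_besselI0 : Continuous besselI0 :=
  continuous_const.mul
    (intervalIntegral.continuous_parametric_intervalIntegral_of_continuous' (by fun_prop) _ _)

end Bessel

section RiceDensity

/-- The conditional density at `y` of the output power, given the received power `p`: the squared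
modulus of a Rice distributed amplitude. -/
noncomputable def riceDensity (y p : ℝ) : ℝ :=
  Real.exp (-(y + p)) * besselI0 (2 * √(y * p))

/-- The entire extension of `riceDensity y` to complex received powers. -/
noncomputable def complexRiceDensity (y : ℝ) (p : ℂ) : ℂ :=
  Complex.exp (-(y + p)) * B (y * p)

variable {y p : ℝ}

lemma complexRiceDensity_ofReal (h : 0 ≤ y * p) :
    complexRiceDensity y p = riceDensity y p := by
  have hsq : ((2 * √(y * p) : ℝ) / 2 : ℂ) ^ 2 = y * p := by
    push_cast
    rw [mul_div_cancel_left₀ _ two_ne_zero, ← Complex.ofReal_pow, Real.sq_sqrt h,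
      Complex.ofReal_mul]
  rw [complexRiceDensity, riceDensity, Complex.ofReal_mul, ofReal_besselI0, hsq]
  push_cast
  rfl

lemma exp_neg_le_riceDensity (y p : ℝ) : Real.exp (-(y + p)) ≤ riceDensity y p :=
  le_mul_of_one_le_right (Real.exp_pos _).le (one_le_besselI0 _)

lemma riceDensity_pos (y p : ℝ) : 0 < riceDensity y p :=
  (Real.exp_pos _).trans_le (exp_neg_le_riceDensity y p)

lemma riceDensity_le_one (hy : 0 ≤ y) (hp : 0 ≤ p) : riceDensity y p ≤ 1 := by
  have hB : ‖B (y * p)‖ ≤ Real.exp (y + p) :=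
    norm_B_le_exp_add hy hp (by simp [abs_of_nonneg hy, abs_of_nonneg hp])
  calc riceDensity y p = ‖complexRiceDensity y p‖ := by
        rw [complexRiceDensity_ofReal (mul_nonneg hy hp), Complex.norm_real,
          Real.norm_of_nonneg (riceDensity_pos y p).le]
    _ ≤ Real.exp (-(y + p)) * Real.exp (y + p) := by
        rw [complexRiceDensity, norm_mul, Complex.norm_exp]
        simpa using mul_le_mul_of_nonneg_left hB (Real.exp_pos _).le
    _ = 1 := by rw [← Real.exp_add, neg_add_cancel, Real.exp_zero]

lemma differentiable_complexRiceDensity (y : ℝ) : Differentiable ℂ (complexRiceDensity y) := by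
  have hB := differentiable_B
  unfold complexRiceDensity
  fun_prop

lemma norm_complexRiceDensity_le (hy : 0 ≤ y) (p : ℂ) :
    ‖complexRiceDensity y p‖ ≤ Real.exp (3 * ‖p‖) * Real.exp (-(y / 2)) := by
  have hexp : ‖Complex.exp (-(y + p))‖ ≤ Real.exp (-y + ‖p‖) := by
    rw [Complex.norm_exp, Real.exp_le_exp, Complex.neg_re, Complex.add_re, Complex.ofReal_re]
    linarith [neg_le_of_abs_le (Complex.abs_re_le_norm p)]
  have hB : ‖B (y * p)‖ ≤ Real.exp (y / 2 + 2 * ‖p‖) := by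
    refine norm_B_le_exp_add (by positivity) (by positivity) (le_of_eq ?_)
    rw [norm_mul, Complex.norm_real, Real.norm_of_nonneg hy]
    ring
  calc ‖complexRiceDensity y p‖
      ≤ Real.exp (-y + ‖p‖) * Real.exp (y / 2 + 2 * ‖p‖) := by
        rw [complexRiceDensity, norm_mul]
        gcongr
    _ = Real.exp (3 * ‖p‖) * Real.exp (-(y / 2)) := by
        rw [← Real.exp_add, ← Real.exp_add]
        ring_nf

end RiceDensity

section ReceivedPower

/-- The power `|√x + √I e^{iθ}|²` of the superposition of a signal of power `x` and an interference
of power `I` with relative phase `θ`. -/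
noncomputable def receivedPower (I x θ : ℝ) : ℝ :=
  x + I + 2 * √(x * I) * Real.cos θ

/-- The extension of `receivedPower` to complex signal powers, by the principal square root. -/
noncomputable def complexReceivedPower (I : ℝ) (z : ℂ) (θ : ℝ) : ℂ :=
  z + I + 2 * z ^ ((1:ℂ)/2) * (√I : ℂ) * (Real.cos θ : ℂ)

variable {I x : ℝ}

lemma complexReceivedPower_ofReal (hx : 0 ≤ x) (θ : ℝ) :
    complexReceivedPower I x θ = receivedPower I x θ := by
  have hsqrt : (x : ℂ) ^ ((1:ℂ)/2) = (√x : ℂ) := by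
    rw [Real.sqrt_eq_rpow, Complex.ofReal_cpow hx]
    norm_num
  rw [complexReceivedPower, receivedPower, hsqrt, Real.sqrt_mul hx]
  push_cast
  ring

lemma two_mul_sqrt_mul_le_add (hI : 0 ≤ I) (hx : 0 ≤ x) : 2 * √(x * I) ≤ x + I := by
  rw [Real.sqrt_mul hx]
  nlinarith [sq_nonneg (√x - √I), Real.sq_sqrt hx, Real.sq_sqrt hI]

lemma receivedPower_nonneg (hI : 0 ≤ I) (hx : 0 ≤ x) (θ : ℝ) : 0 ≤ receivedPower I x θ := by
  have h := mul_le_mul_of_nonneg_left (Real.neg_one_le_cos θ)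
    (by positivity : 0 ≤ 2 * √(x * I))
  rw [receivedPower]
  linarith [two_mul_sqrt_mul_le_add hI hx]

lemma norm_complexReceivedPower_le (hI : 0 ≤ I) (z : ℂ) (θ : ℝ) :
    ‖complexReceivedPower I z θ‖ ≤ 2 * (‖z‖ + I) := by
  have hsqrt : ‖z ^ ((1:ℂ)/2)‖ = √‖z‖ := by
    rw [← Real.sqrt_sq (norm_nonneg (z ^ _)), ← norm_pow]
    simp
  calc ‖complexReceivedPower I z θ‖
      ≤ ‖z‖ + ‖(I : ℂ)‖ + ‖2 * z ^ ((1:ℂ)/2) * (√I : ℂ) * (Real.cos θ : ℂ)‖ := norm_add₃_le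
    _ = ‖z‖ + I + 2 * √(‖z‖ * I) * |Real.cos θ| := by
        rw [norm_mul, norm_mul, norm_mul, hsqrt, Complex.norm_real, Complex.norm_real,
          Complex.norm_real, Complex.norm_two, Real.norm_of_nonneg hI,
          Real.norm_of_nonneg (Real.sqrt_nonneg I), Real.norm_eq_abs,
          Real.sqrt_mul (norm_nonneg z), mul_assoc 2 √‖z‖]
    _ ≤ ‖z‖ + I + 2 * √(‖z‖ * I) :=
        add_le_add_right
          (mul_le_of_le_one_right (by positivity) (Real.abs_cos_le_one θ)) _
    _ ≤ 2 * (‖z‖ + I) := by linarith [two_mul_sqrt_mul_le_add hI (norm_nonneg z)]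

lemma receivedPower_le (hI : 0 ≤ I) (hx : 0 ≤ x) (θ : ℝ) :
    receivedPower I x θ ≤ 2 * (x + I) := by
  have h := norm_complexReceivedPower_le hI x θ
  rw [complexReceivedPower_ofReal hx, Complex.norm_real, Complex.norm_real,
    Real.norm_of_nonneg hx] at h
  exact (Real.le_norm_self _).trans h

lemma differentiableAt_complexReceivedPower (I θ : ℝ) {z : ℂ} (hz : z ∈ Complex.slitPlane) :
    DifferentiableAt ℂ (complexReceivedPower I · θ) z := by
  have hsqrt : DifferentiableAt ℂ (fun z : ℂ => z ^ ((1:ℂ)/2)) z :=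
    differentiableAt_id.cpow_const hz
  exact (differentiableAt_id.add_const _).add (((hsqrt.const_mul 2).mul_const _).mul_const _)

end ReceivedPower

section UniformPhase

/-- The uniform distribution of the phase on `(-π, π]`. -/
noncomputable def uniformPhase : Measure ℝ :=
  ProbabilityTheory.cond volume (Set.Ioc (-π) π)

instance : IsProbabilityMeasure uniformPhase :=
  ProbabilityTheory.cond_isProbabilityMeasure_of_finite (by simp [Real.pi_pos]) (by simp)

lemma integral_uniformPhase {E : Type*} [NormedAddCommGroup E] [NormedSpace ℝ E] (f : ℝ → E) :
    ∫ θ, f θ ∂uniformPhase = (1 / (2 * π)) • ∫ θ in (-π)..π, f θ := by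
  have hpi := Real.pi_pos
  rw [uniformPhase, ProbabilityTheory.cond, integral_smul_measure, Real.volume_Ioc,
    intervalIntegral.integral_of_le (by linarith), ENNReal.toReal_inv,
    ENNReal.toReal_ofReal (by linarith), one_div]
  ring_nf

end UniformPhase

section Kernel

variable {I x y : ℝ}

lemma K_eq_integral_uniformPhase (I x y : ℝ) :
    K I x y = ∫ θ, riceDensity y (receivedPower I x θ) ∂uniformPhase := by
  simp only [integral_uniformPhase, K, riceDensity, receivedPower, smul_eq_mul, add_assoc]

lemma Kc_eq_integral_uniformPhase (I : ℝ) (z : ℂ) (y : ℝ) :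
    Kc I z y = ∫ θ, complexRiceDensity y (complexReceivedPower I z θ) ∂uniformPhase := by
  simp only [integral_uniformPhase, Kc, complexRiceDensity, complexReceivedPower,
    Complex.real_smul, add_assoc]

lemma Kc_ofReal (hI : 0 ≤ I) (hx : 0 ≤ x) (hy : 0 ≤ y) : Kc I x y = K I x y := by
  rw [Kc_eq_integral_uniformPhase, K_eq_integral_uniformPhase, ← integral_complex_ofReal]
  congr 1 with θ
  rw [complexReceivedPower_ofReal hx,
    complexRiceDensity_ofReal (mul_nonneg hy (receivedPower_nonneg hI hx θ))]

lemma continuous_riceDensity_receivedPower (I : ℝ) :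
    Continuous fun q : (ℝ × ℝ) × ℝ => riceDensity q.1.2 (receivedPower I q.1.1 q.2) := by
  have := continuous_besselI0
  unfold riceDensity receivedPower
  fun_prop

lemma stronglyMeasurable_K (I : ℝ) : StronglyMeasurable fun q : ℝ × ℝ => K I q.1 q.2 := by
  simp only [K_eq_integral_uniformPhase]
  exact (continuous_riceDensity_receivedPower I).stronglyMeasurable.integral_prod_right'

lemma K_mem_Icc (hI : 0 ≤ I) (hx : 0 ≤ x) (hy : 0 ≤ y) :
    K I x y ∈ Set.Icc (Real.exp (-(y + 2 * (x + I)))) 1 := by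
  have hmem (θ : ℝ) : riceDensity y (receivedPower I x θ) ∈
      Set.Icc (Real.exp (-(y + 2 * (x + I)))) 1 := by
    refine ⟨le_trans ?_ (exp_neg_le_riceDensity _ _),
      riceDensity_le_one hy (receivedPower_nonneg hI hx θ)⟩
    gcongr
    exact receivedPower_le hI hx θ
  have hint : Integrable (fun θ => riceDensity y (receivedPower I x θ)) uniformPhase :=
    Integrable.of_mem_Icc _ _ ((continuous_riceDensity_receivedPower I).comp
      (Continuous.prodMk_right (x, y))).aemeasurable (Eventually.of_forall hmem)
  rw [K_eq_integral_uniformPhase]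
  exact (convex_Icc _ _).integral_mem isClosed_Icc (Eventually.of_forall hmem) hint

lemma continuous_complexRiceDensity_complexReceivedPower (I : ℝ) (z : ℂ) :
    Continuous fun q : ℝ × ℝ => complexRiceDensity q.1 (complexReceivedPower I z q.2) := by
  have := differentiable_B.continuous
  unfold complexRiceDensity complexReceivedPower
  fun_prop

lemma stronglyMeasurable_Kc (I : ℝ) (z : ℂ) : StronglyMeasurable (Kc I z) := by
  rw [funext (Kc_eq_integral_uniformPhase I z)]
  exact (continuous_complexRiceDensity_complexReceivedPower I
    z).stronglyMeasurable.integral_prod_right'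

lemma norm_complexRiceDensity_complexReceivedPower_le (hI : 0 ≤ I) (hy : 0 ≤ y) {z : ℂ} {R : ℝ}
    (hz : ‖z‖ ≤ R) (θ : ℝ) :
    ‖complexRiceDensity y (complexReceivedPower I z θ)‖ ≤
      Real.exp (6 * (R + I)) * Real.exp (-(y / 2)) := by
  refine (norm_complexRiceDensity_le hy _).trans ?_
  have hpower : 3 * ‖complexReceivedPower I z θ‖ ≤ 6 * (R + I) := by
    linarith [norm_complexReceivedPower_le hI z θ]
  gcongr

lemma norm_Kc_le (hI : 0 ≤ I) (hy : 0 ≤ y) {z : ℂ} {R : ℝ} (hz : ‖z‖ ≤ R) :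
    ‖Kc I z y‖ ≤ Real.exp (6 * (R + I)) * Real.exp (-(y / 2)) := by
  rw [Kc_eq_integral_uniformPhase]
  simpa using norm_integral_le_of_norm_le_const (μ := uniformPhase) (Eventually.of_forall
    (norm_complexRiceDensity_complexReceivedPower_le hI hy hz))

lemma differentiableAt_Kc (hI : 0 ≤ I) (hy : 0 ≤ y) {z₀ : ℂ} (hz₀ : z₀ ∈ Complex.slitPlane) :
    DifferentiableAt ℂ (Kc I · y) z₀ := by
  obtain ⟨r, hr, hball⟩ := Metric.isOpen_iff.1 Complex.isOpen_slitPlane z₀ hz₀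
  simp only [Kc_eq_integral_uniformPhase]
  refine differentiableAt_integral_of_dominated hr (fun z _ => ?_)
    (Eventually.of_forall fun θ z hz => ?_)
    (Eventually.of_forall fun θ z hz =>
      norm_complexRiceDensity_complexReceivedPower_le hI hy (norm_lt_of_mem_ball hz).le θ)
    (integrable_const _)
  · exact ((continuous_complexRiceDensity_complexReceivedPower I z).comp
      (Continuous.prodMk_right y)).aestronglyMeasurable
  · exact ((differentiable_complexRiceDensity y _).comp z
      (differentiableAt_complexReceivedPower I θ (hball hz))).differentiableWithinAt

end Kernel

section KernelTransform

variable {I : ℝ} {φ : ℝ → ℂ}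

lemma aestronglyMeasurable_Kc_mul (I : ℝ) (z : ℂ)
    (hφ : IntegrableOn (fun y => (Real.exp (-(y / 2)) : ℂ) * φ y) (Set.Ioi 0)) :
    AEStronglyMeasurable (fun y => Kc I z y * φ y) (volume.restrict (Set.Ioi 0)) := by
  have hexp : Continuous fun y : ℝ => (Real.exp (y / 2) : ℂ) := by fun_prop
  refine (((stronglyMeasurable_Kc I z).aestronglyMeasurable.mul
    hexp.aestronglyMeasurable).mul hφ.aestronglyMeasurable).congr (Eventually.of_forall fun y => ?_)
  simp [Real.exp_neg, mul_assoc]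

lemma norm_Kc_mul_le (hI : 0 ≤ I) {z : ℂ} {R y : ℝ} (hz : ‖z‖ ≤ R) (hy : 0 ≤ y) :
    ‖Kc I z y * φ y‖ ≤ Real.exp (6 * (R + I)) * ‖(Real.exp (-(y / 2)) : ℂ) * φ y‖ := by
  rw [norm_mul, norm_mul, Complex.norm_real, Real.norm_of_nonneg (Real.exp_pos _).le, ← mul_assoc]
  gcongr
  exact norm_Kc_le hI hy hz

lemma integrableOn_Kc_mul (hI : 0 ≤ I) (z : ℂ)
    (hφ : IntegrableOn (fun y => (Real.exp (-(y / 2)) : ℂ) * φ y) (Set.Ioi 0)) :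
    IntegrableOn (fun y => Kc I z y * φ y) (Set.Ioi 0) := by
  refine (hφ.norm.const_mul (Real.exp (6 * (‖z‖ + I)))).mono'
    (aestronglyMeasurable_Kc_mul I z hφ) ?_
  filter_upwards [ae_restrict_mem measurableSet_Ioi] with y hy
  exact norm_Kc_mul_le hI le_rfl (le_of_lt hy)

lemma analyticOnNhd_integral_Kc_mul (hI : 0 ≤ I)
    (hφ : IntegrableOn (fun y => (Real.exp (-(y / 2)) : ℂ) * φ y) (Set.Ioi 0)) :
    AnalyticOnNhd ℂ (fun z => ∫ y in Set.Ioi (0:ℝ), Kc I z y * φ y) Complex.slitPlane := by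
  refine DifferentiableOn.analyticOnNhd (fun z₀ hz₀ => ?_) Complex.isOpen_slitPlane
  obtain ⟨r, hr, hball⟩ := Metric.isOpen_iff.1 Complex.isOpen_slitPlane z₀ hz₀
  refine (differentiableAt_integral_of_dominated hr
    (fun z _ => aestronglyMeasurable_Kc_mul I z hφ) ?_ ?_
    (hφ.norm.const_mul (Real.exp (6 * (‖z₀‖ + r + I))))).differentiableWithinAt
  · filter_upwards [ae_restrict_mem measurableSet_Ioi] with y hy z hz
    exact ((differentiableAt_Kc hI (le_of_lt hy) (hball hz)).mul_const
      _).differentiableWithinAt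
  · filter_upwards [ae_restrict_mem measurableSet_Ioi] with y hy z hz
    exact norm_Kc_mul_le hI (norm_lt_of_mem_ball hz).le (le_of_lt hy)

end KernelTransform

section OutputDensity

/-- The output density `f(y; F)` of the channel with input distribution `F`. -/
noncomputable def outputDensity (I : ℝ) (F : Measure ℝ) (y : ℝ) : ℝ := ∫ x, K I x y ∂F

variable {I : ℝ} {F : Measure ℝ}

lemma measurable_outputDensity (I : ℝ) (F : Measure ℝ) [SFinite F] :
    Measurable (outputDensity I F) :=
  ((stronglyMeasurable_K I).comp_measurable measurable_swap).integral_prod_right'.measurable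

lemma ae_nonneg_of_measure_Iio_eq_zero (hF : F (Set.Iio 0) = 0) : ∀ᵐ x ∂F, 0 ≤ x := by
  simpa [ae_iff, Set.Iio] using hF

lemma outputDensity_mem_Icc [IsFiniteMeasure F] (hI : 0 ≤ I) (hF : F (Set.Iio 0) = 0) {y : ℝ}
    (hy : 0 ≤ y) :
    outputDensity I F y ∈
      Set.Icc (Real.exp (-y) * ∫ x, Real.exp (-(2 * (x + I))) ∂F) (F.real Set.univ) := by
  have hK : ∀ᵐ x ∂F, K I x y ∈ Set.Icc (Real.exp (-(y + 2 * (x + I)))) 1 :=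
    (ae_nonneg_of_measure_Iio_eq_zero hF).mono fun x hx => K_mem_Icc hI hx hy
  have hK_nonneg : ∀ᵐ x ∂F, 0 ≤ K I x y := hK.mono fun x hx => (Real.exp_pos _).le.trans hx.1
  have hK_int : Integrable (fun x => K I x y) F :=
    Integrable.of_mem_Icc 0 1
      ((stronglyMeasurable_K I).comp_measurable measurable_prodMk_right).measurable.aemeasurable
      (by filter_upwards [hK, hK_nonneg] with x hx hx' using ⟨hx', hx.2⟩)
  constructor
  · rw [← integral_const_mul]
    refine integral_mono_of_nonneg (Eventually.of_forall fun x => by positivity) hK_int ?_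
    filter_upwards [hK] with x hx
    rw [← Real.exp_add, ← neg_add]
    exact hx.1
  · rw [outputDensity]
    simpa using integral_mono_of_nonneg hK_nonneg (integrable_const (1 : ℝ))
      (hK.mono fun x hx => hx.2)

lemma exists_abs_log_outputDensity_le [IsFiniteMeasure F] [NeZero F] (hI : 0 ≤ I)
    (hF : F (Set.Iio 0) = 0) :
    ∃ C : ℝ, ∀ y, 0 ≤ y → |Real.log (outputDensity I F y)| ≤ y + C := by
  set c := ∫ x, Real.exp (-(2 * (x + I))) ∂F
  have hc : 0 < c := by
    refine integral_exp_pos (Integrable.of_mem_Icc 0 1 (by fun_prop) ?_)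
    filter_upwards [ae_nonneg_of_measure_Iio_eq_zero hF] with x hx
    exact ⟨(Real.exp_pos _).le, Real.exp_le_one_iff.2 (by linarith)⟩
  refine ⟨|Real.log c| + |Real.log (F.real Set.univ)|, fun y hy => ?_⟩
  obtain ⟨hlower, hupper⟩ := outputDensity_mem_Icc hI hF hy
  have hpos : 0 < Real.exp (-y) * c := by positivity
  have hlog_lower : -y + Real.log c ≤ Real.log (outputDensity I F y) := by
    simpa [Real.log_mul (Real.exp_pos (-y)).ne' hc.ne'] using Real.log_le_log hpos hlower
  have hlog_upper := Real.log_le_log (hpos.trans_le hlower) hupper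
  rw [abs_le]
  constructor
  · linarith [neg_abs_le (Real.log c), abs_nonneg (Real.log (F.real Set.univ))]
  · linarith [abs_nonneg (Real.log c), le_abs_self (Real.log (F.real Set.univ))]

lemma integrableOn_exp_neg_half_mul_add (C : ℝ) :
    IntegrableOn (fun y : ℝ => Real.exp (-(y / 2)) * (y + C)) (Set.Ioi 0) := by
  have hexp : IntegrableOn (fun y : ℝ => Real.exp (-(y / 2))) (Set.Ioi 0) := by
    simpa [neg_div, div_eq_inv_mul] using exp_neg_integrableOn_Ioi 0 (one_half_pos (α := ℝ))
  have hid : IntegrableOn (fun y : ℝ => Real.exp (-(y / 2)) * y) (Set.Ioi 0) := by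
    simpa [div_eq_inv_mul, mul_comm] using
      integrableOn_rpow_mul_exp_neg_mul_rpow (s := 1) (by norm_num) one_pos (one_half_pos (α := ℝ))
  simp only [mul_add]
  exact hid.add (hexp.mul_const C)

lemma integrableOn_exp_neg_half_mul_log_outputDensity [IsFiniteMeasure F] [NeZero F] (hI : 0 ≤ I)
    (hF : F (Set.Iio 0) = 0) :
    IntegrableOn (fun y => (Real.exp (-(y / 2)) : ℂ) * (Real.log (outputDensity I F y) : ℂ))
      (Set.Ioi 0) := by
  obtain ⟨C, hC⟩ := exists_abs_log_outputDensity_le hI hF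
  have hmeas := measurable_outputDensity I F
  refine (integrableOn_exp_neg_half_mul_add C).mono' (by fun_prop) ?_
  filter_upwards [ae_restrict_mem measurableSet_Ioi] with y hy
  rw [norm_mul, Complex.norm_real, Complex.norm_real, Real.norm_of_nonneg (Real.exp_pos _).le,
    Real.norm_eq_abs]
  gcongr
  exact hC y (le_of_lt hy)

end OutputDensity

theorem stmt_15_general (I : ℝ) (hI : 0 ≤ I) (F : Measure ℝ) [IsFiniteMeasure F] [NeZero F]
    (hF : F (Set.Iio 0) = 0) :
    (∀ z : ℂ, IntegrableOn (fun y => Kc I z y * (Real.log (outputDensity I F y) : ℂ))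
      (Set.Ioi 0)) ∧
    AnalyticOnNhd ℂ
      (fun z : ℂ => -∫ y in Set.Ioi (0:ℝ), Kc I z y * (Real.log (outputDensity I F y) : ℂ))
      Complex.slitPlane ∧
    ∀ x : ℝ, 0 ≤ x →
      (-∫ y in Set.Ioi (0:ℝ), Kc I (x : ℂ) y * (Real.log (outputDensity I F y) : ℂ))
        = ((-∫ y in Set.Ioi (0:ℝ), K I x y * Real.log (outputDensity I F y) : ℝ) : ℂ) := by
  have hlog := integrableOn_exp_neg_half_mul_log_outputDensity hI hF
  refine ⟨fun z => integrableOn_Kc_mul hI z hlog, (analyticOnNhd_integral_Kc_mul hI hlog).neg,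
    fun x hx => ?_⟩
  rw [Complex.ofReal_neg, ← integral_complex_ofReal]
  congr 1
  refine setIntegral_congr_fun measurableSet_Ioi fun y hy => ?_
  simp only [Kc_ofReal hI hx (le_of_lt hy), Complex.ofReal_mul]

theorem stmt_15 (S I : ℝ) (hS : 0 ≤ S) (hI : 0 ≤ I)
    (F : Measure ℝ) [IsProbabilityMeasure F] (hsupp : F (Set.Iio 0) = 0)
    (hmean : (∫ x, x ∂F) ≤ S) :
    AnalyticOnNhd ℂ
      (fun z : ℂ => -∫ y in Set.Ioi (0:ℝ), Kc I z y * (Real.log (∫ x, K I x y ∂F) : ℂ))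
      {z : ℂ | 0 < z.re} ∧
    ∀ x : ℝ, 0 < x →
      (-∫ y in Set.Ioi (0:ℝ), Kc I (x : ℂ) y * (Real.log (∫ x', K I x' y ∂F) : ℂ))
        = ((-∫ y in Set.Ioi (0:ℝ), K I x y * Real.log (∫ x', K I x' y ∂F) : ℝ) : ℂ) := by
  obtain ⟨-, hanalytic, hreal⟩ := stmt_15_general I hI F hsupp
  exact ⟨hanalytic.mono fun z hz => Or.inl hz, fun x hx => hreal x hx.le⟩
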